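/- arXiv:1807.01333 — 3 statements merged into one kernel-verified Lean document; each statement's English description precedes it below -/
import Mathlib

section
/- Let w : {1,…,n} → ℝ with w(j) > 0 for all j and f : {1,…,n} → ℝ with f(1) > 0 and f non-increasing on {1,…,n}; set f(0) = w(0) = f(n+1) = w(n+1) = 0. Suppose additionally that f(j) ≥ (w(j)/j) · min_{l ∈ {1,…,n}} (l·f(1)/w(l)) for all j ∈ {1,…,n}. Then the linear program minimizing μ over λ ≥ 0, μ ∈ ℝ subject to μ·w(j) ≥ w(l) + λ·[j·f(j) − l·f(j+1)] for all j,l ∈ {0,…,n} with 1 ≤ j+l ≤ n, and μ·w(j) ≥ w(l) + λ·[(n−l)·f(j) − (n−j)·f(j+1)] for all j,l ∈ {0,…,n} with j+l > n, admits an optimal solution with λ = λ* := max_{l ∈ {1,…,n}} w(l)/(l·f(1)). -/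
/-!
The constraints with `j = 0` say exactly that `λ ≥ w(l) / (l f(1))` for every `l`, that is,
`λ ≥ λ*`. The point is that every feasible `(λ, μ)` stays feasible when `λ` is lowered to `λ*`
(`ReducedFeasible.lower`); then the infimum of `μ` may be taken over the section `λ = λ*`, which
is a nonempty closed set bounded below, so it is attained.

Lowering `λ` only threatens constraints whose bracket is negative. Since `f` is non-increasing
and positive, this forces `j < l`. The extra hypothesis on `f` reads `w(l) ≤ λ* l f(l)`, so
`w(l) ≤ λ* l f(j+1)`, and the left-hand side of either constraint at `λ*` is then at most
`λ* j f(j)`. This is at most `λ j f(j) ≤ μ w(j)` by the constraint `(j, 0)` for `(λ, μ)`.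
-/

/-- Feasibility for the reduced dual linear program (8) (case of non-increasing `f`):
`λ ≥ 0`, `μ w(j) ≥ w(l) + λ[j f(j) − l f(j+1)]` for `j,l ∈ [0,n]`, `1 ≤ j+l ≤ n`, and
`μ w(j) ≥ w(l) + λ[(n−l) f(j) − (n−j) f(j+1)]` for `j,l ∈ [0,n]`, `j+l > n`. -/
def ReducedFeasible (f w : ℕ → ℝ) (n : ℕ) (lam mu : ℝ) : Prop :=
  0 ≤ lam ∧
  (∀ j l : ℕ, j ≤ n → l ≤ n → 1 ≤ j + l → j + l ≤ n →
      w l + lam * ((j : ℝ) * f j - (l : ℝ) * f (j + 1)) ≤ mu * w j) ∧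
  (∀ j l : ℕ, j ≤ n → l ≤ n → n < j + l →
      w l + lam * (((n : ℝ) - (l : ℝ)) * f j - ((n : ℝ) - (j : ℝ)) * f (j + 1)) ≤ mu * w j)

/-- A feasible pair remains feasible when `λ` is lowered to a value `L` which still satisfies the
`j = 0` constraints (`hL`) and for which `w(j) ≤ L j f(j)`. -/
theorem ReducedFeasible.lower {n : ℕ} {w f : ℕ → ℝ} {L lam mu : ℝ} (hL0 : 0 < L)
    (hw0 : w 0 = 0) (hf0 : f 0 = 0)
    (hanti : ∀ i j, 1 ≤ i → i ≤ j → j ≤ n → f j ≤ f i)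
    (hpos : ∀ j, 1 ≤ j → j ≤ n → 0 < f j) (hfn1 : f (n + 1) = 0)
    (hL : ∀ l, 1 ≤ l → l ≤ n → w l ≤ L * (l * f 1))
    (hwf : ∀ j, 1 ≤ j → j ≤ n → w j ≤ L * (j * f j))
    (hle : L ≤ lam) (h : ReducedFeasible f w n lam mu) : ReducedFeasible f w n L mu := by
  obtain ⟨-, h1, h2⟩ := h
  have base : ∀ j, 1 ≤ j → j ≤ n → L * (j * f j) ≤ mu * w j := by
    intro j hj hjn
    have h0 := h1 j 0 hjn (Nat.zero_le _) (by omega) (by omega)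
    simp only [hw0, Nat.cast_zero, zero_mul, sub_zero, zero_add] at h0
    have : 0 ≤ (j : ℝ) * f j := mul_nonneg (Nat.cast_nonneg _) (hpos j hj hjn).le
    exact (mul_le_mul_of_nonneg_right hle this).trans h0
  have key : ∀ j l, j + 1 ≤ l → l ≤ n → w l ≤ L * (l * f (j + 1)) := by
    intro j l hjl hln
    have ha := hanti (j + 1) l (by omega) hjl hln
    refine (hwf l (by omega) hln).trans ?_
    gcongr
  refine ⟨hL0.le, ?_, ?_⟩
  · intro j l hjn hln hpos' hsum
    rcases Nat.eq_zero_or_pos j with rfl | hj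
    · have := hL l (by omega) hln
      simp only [hw0, hf0, Nat.cast_zero, zero_add]
      linarith
    · by_cases hA : 0 ≤ (j : ℝ) * f j - l * f (j + 1)
      · have := h1 j l hjn hln hpos' hsum
        have := mul_le_mul_of_nonneg_right hle hA
        linarith
      · have hjl : j < l := by
          by_contra hc
          apply hA
          rcases Nat.lt_or_ge j n with hlt | hge
          · have ha := hanti j (j + 1) hj (by omega) (by omega)
            have hp := hpos (j + 1) (by omega) (by omega)
            have hc' : (l : ℝ) ≤ j := by exact_mod_cast not_lt.mp hc
            have : (l : ℝ) * f (j + 1) ≤ j * f j := by gcongr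
            linarith
          · obtain rfl : j = n := le_antisymm hjn hge
            rw [hfn1]
            have := mul_nonneg (Nat.cast_nonneg (α := ℝ) j) (hpos j hj le_rfl).le
            linarith
        have := key j l hjl hln
        have := base j hj hjn
        linarith
  · intro j l hjn hln hsum
    have hj : 1 ≤ j := by omega
    have hlnR : (l : ℝ) ≤ n := by exact_mod_cast hln
    by_cases hA : 0 ≤ ((n : ℝ) - l) * f j - ((n : ℝ) - j) * f (j + 1)
    · have := h2 j l hjn hln hsum
      have := mul_le_mul_of_nonneg_right hle hA
      linarith
    · have hlt : j < n := by
        by_contra hc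
        apply hA
        obtain rfl : j = n := le_antisymm hjn (not_lt.mp hc)
        rw [hfn1]
        have := mul_nonneg (sub_nonneg.mpr hlnR) (hpos j hj le_rfl).le
        linarith
      have ha := hanti j (j + 1) hj (by omega) (by omega)
      have hp := hpos (j + 1) (by omega) (by omega)
      have hjl : j < l := by
        by_contra hc
        apply hA
        have hc' : (l : ℝ) ≤ j := by exact_mod_cast not_lt.mp hc
        have h3 : ((n : ℝ) - j) * f (j + 1) ≤ (n - l) * f j := by
          have : (0 : ℝ) ≤ n - l := sub_nonneg.mpr hlnR
          gcongr
        linarith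
      have hk := key j l hjl hln
      have hb := base j hj hjn
      have hs : (0 : ℝ) ≤ j + l - n := by
        have : (n : ℝ) ≤ j + l := by exact_mod_cast hsum.le
        linarith
      -- `(n - l) f(j) + (j + l - n) f(j+1) ≤ j f(j)`, the difference being the product below.
      have h4 := mul_nonneg hL0.le (mul_nonneg hs (sub_nonneg.mpr ha))
      linarith

/-- For `λ = L` satisfying the `j = 0` constraints, all other constraints hold once `μ` is large,
since `w(j) > 0` for `1 ≤ j ≤ n`. -/
theorem exists_reducedFeasible {n : ℕ} {w f : ℕ → ℝ} {L : ℝ} (hL0 : 0 < L)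
    (hw : ∀ j, 1 ≤ j → j ≤ n → 0 < w j) (hw0 : w 0 = 0) (hf0 : f 0 = 0)
    (hL : ∀ l, 1 ≤ l → l ≤ n → w l ≤ L * (l * f 1)) :
    ∃ mu, ReducedFeasible f w n L mu := by
  have bound : ∀ g : ℕ → ℕ → ℝ, ∃ M, ∀ j l, j ≤ n → l ≤ n → g j l / w j ≤ M := by
    intro g
    obtain ⟨M, hM⟩ := ((Finset.range (n + 1) ×ˢ Finset.range (n + 1)).image
      (fun p => g p.1 p.2 / w p.1)).exists_le
    refine ⟨M, fun j l hj hl => hM _ (Finset.mem_image.mpr ⟨(j, l), ?_, rfl⟩)⟩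
    simp only [Finset.mem_product, Finset.mem_range]
    omega
  obtain ⟨M1, hM1⟩ := bound fun j l => w l + L * ((j : ℝ) * f j - (l : ℝ) * f (j + 1))
  obtain ⟨M2, hM2⟩ := bound fun j l =>
    w l + L * (((n : ℝ) - (l : ℝ)) * f j - ((n : ℝ) - (j : ℝ)) * f (j + 1))
  refine ⟨max M1 M2, hL0.le, ?_, ?_⟩
  · intro j l hjn hln hpos hsum
    rcases Nat.eq_zero_or_pos j with rfl | hj
    · have := hL l (by omega) hln
      simp only [hw0, hf0, Nat.cast_zero, zero_add]
      linarith
    · exact (div_le_iff₀ (hw j hj hjn)).mp ((hM1 j l hjn hln).trans (le_max_left _ _))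
  · intro j l hjn hln hsum
    exact (div_le_iff₀ (hw j (by omega) hjn)).mp ((hM2 j l hjn hln).trans (le_max_right _ _))

theorem isClosed_setOf_reducedFeasible (f w : ℕ → ℝ) (n : ℕ) (L : ℝ) :
    IsClosed {mu | ReducedFeasible f w n L mu} := by
  simp only [ReducedFeasible, Set.ofPred_and, Set.ofPred_forall]
  refine isClosed_const.inter (IsClosed.inter ?_ ?_)
  · refine isClosed_iInter fun j => isClosed_iInter fun l => isClosed_iInter fun _ =>
      isClosed_iInter fun _ => isClosed_iInter fun _ => isClosed_iInter fun _ => ?_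
    exact isClosed_le continuous_const (continuous_id.mul continuous_const)
  · refine isClosed_iInter fun j => isClosed_iInter fun l => isClosed_iInter fun _ =>
      isClosed_iInter fun _ => isClosed_iInter fun _ => ?_
    exact isClosed_le continuous_const (continuous_id.mul continuous_const)

/-- Corollary 1(ii): if moreover `f(j) ≥ (w(j)/j)·min_{l∈[n]} (l f(1)/w(l))`, then
the reduced dual linear program admits an optimal solution with
`λ = λ* = max_{l∈[n]} w(l)/(l f(1))`. -/
theorem reduced_dual_optimal_lambda (n : ℕ) (w f : ℕ → ℝ) (hn : 1 ≤ n)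
    (hw : ∀ j, 1 ≤ j → j ≤ n → 0 < w j)
    (hw0 : w 0 = 0) (hwn1 : w (n + 1) = 0)
    (hf0 : f 0 = 0) (hfn1 : f (n + 1) = 0)
    (hf1 : 0 < f 1)
    (hmono : ∀ j, 1 ≤ j → j + 1 ≤ n → f (j + 1) ≤ f j)
    (hfmin : ∀ j, 1 ≤ j → j ≤ n →
      (w j / (j : ℝ)) *
        ((Finset.Icc 1 n).inf' (Finset.nonempty_Icc.mpr hn)
          (fun l => (l : ℝ) * f 1 / w l)) ≤ f j) :
    ∃ mu : ℝ,
      ReducedFeasible f w n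
        ((Finset.Icc 1 n).sup' (Finset.nonempty_Icc.mpr hn)
          (fun l => w l / ((l : ℝ) * f 1))) mu ∧
      mu = sInf { mu' : ℝ | ∃ lam : ℝ, ReducedFeasible f w n lam mu' } := by
  set L := (Finset.Icc 1 n).sup' (Finset.nonempty_Icc.mpr hn)
    (fun l => w l / ((l : ℝ) * f 1)) with hLdef
  have hcast : ∀ l : ℕ, 1 ≤ l → (0 : ℝ) < l := fun l hl => by exact_mod_cast hl
  have hLge : ∀ l, 1 ≤ l → l ≤ n → w l / ((l : ℝ) * f 1) ≤ L := fun l h1 h2 =>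
    Finset.le_sup' (fun l : ℕ => w l / ((l : ℝ) * f 1)) (Finset.mem_Icc.mpr ⟨h1, h2⟩)
  have hL : ∀ l, 1 ≤ l → l ≤ n → w l ≤ L * (l * f 1) := fun l h1 h2 =>
    (div_le_iff₀ (mul_pos (hcast l h1) hf1)).mp (hLge l h1 h2)
  have hL0 : 0 < L :=
    (div_pos (hw 1 le_rfl hn) (mul_pos (hcast 1 le_rfl) hf1)).trans_le (hLge 1 le_rfl hn)
  -- The minimum of `l f(1) / w(l)` is at least `1 / λ*`.
  have hinf : 1 / L ≤ (Finset.Icc 1 n).inf' (Finset.nonempty_Icc.mpr hn)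
      (fun l => (l : ℝ) * f 1 / w l) := by
    refine Finset.le_inf' _ _ fun l hl => ?_
    obtain ⟨h1, h2⟩ := Finset.mem_Icc.mp hl
    rw [div_le_div_iff₀ hL0 (hw l h1 h2)]
    linarith [hL l h1 h2]
  have hwf : ∀ j, 1 ≤ j → j ≤ n → w j ≤ L * (j * f j) := by
    intro j h1 h2
    have h3 := (mul_le_mul_of_nonneg_left hinf
      (div_pos (hw j h1 h2) (hcast j h1)).le).trans (hfmin j h1 h2)
    rw [div_mul_div_comm, mul_one, div_le_iff₀ (mul_pos (hcast j h1) hL0)] at h3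
    linarith
  have hpos : ∀ j, 1 ≤ j → j ≤ n → 0 < f j := by
    intro j h1 h2
    have h3 := (hw j h1 h2).trans_le (hwf j h1 h2)
    exact pos_of_mul_pos_right (pos_of_mul_pos_right h3 hL0.le) (hcast j h1).le
  have hanti : ∀ i j, 1 ≤ i → i ≤ j → j ≤ n → f j ≤ f i := by
    intro i j hi hij
    induction j, hij using Nat.le_induction with
    | base => exact fun _ => le_rfl
    | succ k hk ih => exact fun hkn => (hmono k (by omega) hkn).trans (ih (by omega))
  have hset : {mu' : ℝ | ∃ lam : ℝ, ReducedFeasible f w n lam mu'} =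
      {mu | ReducedFeasible f w n L mu} := by
    ext mu
    refine ⟨fun ⟨lam, h⟩ => ?_, fun h => ⟨L, h⟩⟩
    refine h.lower hL0 hw0 hf0 hanti hpos hfn1 hL hwf ?_
    refine Finset.sup'_le _ _ fun l hl => ?_
    obtain ⟨h1, h2⟩ := Finset.mem_Icc.mp hl
    rw [div_le_iff₀ (mul_pos (hcast l h1) hf1)]
    have := h.2.1 0 l (Nat.zero_le _) h2 (by omega) (by omega)
    simp only [hw0, hf0, Nat.cast_zero, zero_add] at this
    linarith
  have hbdd : BddBelow {mu | ReducedFeasible f w n L mu} := by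
    -- The constraint `(j, l) = (1, 0)` bounds `μ` from below.
    refine ⟨L * f 1 / w 1, fun mu h => ?_⟩
    rw [div_le_iff₀ (hw 1 le_rfl hn)]
    have := h.2.1 1 0 hn (Nat.zero_le _) (by omega) (by omega)
    simp only [hw0, Nat.cast_zero, Nat.cast_one] at this
    linarith
  rw [hset]
  exact ⟨_, (isClosed_setOf_reducedFeasible f w n L).csInf_mem
    (exists_reducedFeasible hL0 hw hw0 hf0 hL) hbdd, rfl⟩
end

section
/- Let w : {1,…,n} → ℝ with w(j) > 0 for all j and f : {1,…,n} → ℝ with f(1) > 0 and f non-increasing on {1,…,n}; set f(0) = w(0) = f(n+1) = w(n+1) = 0, and suppose f(j) ≥ (w(j)/j) · min_{l ∈ {1,…,n}} (l·f(1)/w(l)) for all j ∈ {1,…,n}. With λ* := max_{l ∈ {1,…,n}} w(l)/(l·f(1)), the price of anarchy satisfies PoA(f,w,n) = 1/W*, where W* is the maximum of the following finitely many numbers: w(l)/w(j) + λ*·[j·f(j)/w(j) − l·f(j+1)/w(j)] over all j,l ∈ {0,…,n} with j ≠ 0 and 1 ≤ j+l ≤ n, together with w(l)/w(j) + λ*·[(n−l)·f(j)/w(j)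 − (n−j)·f(j+1)/w(j)] over all j,l ∈ {0,…,n} with j+l > n. -/
/-!
The price of anarchy is governed by a linear program. For an equilibrium `e` and an optimum `o`,
each resource is described by the numbers `c = |e|_r`, `l = |o|_r` and the overlap `x` (the number
of agents using `r` in both). Summing the `n` equilibrium conditions `U_i(e) ≥ U_i(o_i, e_{-i})`,
weighted by `λ*`, reduces `W(o) ≤ μ W(e)` to the resource-wise inequality
`w l + λ* ((c - x) f c - (l - x) f (c + 1)) ≤ μ w c`.

* Lower bound on the price of anarchy. As `f` is non-increasing, the resource-wise inequality is
  worst at the smallest feasible overlap, `x = max 0 (c + l - n)`, which gives exactly the two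
  families in the definition of `W*`; for `c = 0` it is the definition of `λ*`
  (`resource_bound`, `nash_bound`). Equilibria exist by Rosenthal's potential
  (`RAGame.exists_nash`), so the infimum over equilibria is not a junk value.
* Upper bound. Let `(j, l)` attain `W*`. The assumed lower bound on `f` says `w l ≤ λ* l f(l)`, and
  it allows `(j, l)` to be replaced by `(j, 0)` when `l > j`; hence one may assume that the slope
  `s = (j - x) f j - (l - x) f (j + 1)` is nonnegative (`exists_tight`). A cyclically symmetric
  game on `n` agents with `n` resources of value `b f 1` and type `(j, l, x)`, and `n` resources of
  value `s` which are used by `b` agents at the optimum and by nobody at the equilibrium, where `b`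
  attains `λ*`, then has ratio `1 / W*` (`exists_bad_game`). The values are chosen so
  that every agent is indifferent to deviating.
-/

/-- A resource allocation game with at most `n` agents: a finite resource set `R`,
a nonnegative value `v r` for each resource, `m ≤ n` agents, and for each agent a
nonempty finite collection of admissible choices (subsets of `R`). -/
structure RAGame (n : ℕ) where
  R : Type
  [fintypeR : Fintype R]
  [decEqR : DecidableEq R]
  v : R → ℝ
  v_nonneg : ∀ r, 0 ≤ v r
  m : ℕ
  m_le : m ≤ n
  A : Fin m → Finset (Finset R)
  A_ne : ∀ i, (A i).Nonempty

attribute [instance] RAGame.fintypeR RAGame.decEqR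

namespace RAGame

variable {n : ℕ}

/-- An allocation: each agent selects an admissible choice. -/
def Alloc (G : RAGame n) : Type := (i : Fin G.m) → {s : Finset G.R // s ∈ G.A i}

/-- `|a|_r`: the number of agents selecting resource `r` in allocation `a`. -/
def count (G : RAGame n) (a : G.Alloc) (r : G.R) : ℕ :=
  (Finset.univ.filter fun i => r ∈ (a i).val).card

/-- The welfare `W(a) = Σ_{r covered} v_r · w(|a|_r)`. -/
def welfare (G : RAGame n) (w : ℕ → ℝ) (a : G.Alloc) : ℝ :=
  ∑ r ∈ Finset.univ.filter (fun r => 0 < G.count a r), G.v r * w (G.count a r)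

/-- Agent `i`'s utility `U_i(a) = Σ_{r ∈ a_i} v_r · f(|a|_r)`. -/
def utility (G : RAGame n) (f : ℕ → ℝ) (a : G.Alloc) (i : Fin G.m) : ℝ :=
  ∑ r ∈ (a i).val, G.v r * f (G.count a r)

/-- Pure Nash equilibrium: no unilateral deviation improves an agent's utility. -/
def IsNash (G : RAGame n) (f : ℕ → ℝ) (a : G.Alloc) : Prop :=
  ∀ (i : Fin G.m) (s : {s : Finset G.R // s ∈ G.A i}),
    G.utility f (Function.update a i s) i ≤ G.utility f a i

/-- The optimal welfare `max_{a ∈ A} W(a)`. -/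
noncomputable def optVal (G : RAGame n) (w : ℕ → ℝ) : ℝ :=
  sSup { x : ℝ | ∃ a : G.Alloc, x = G.welfare w a }

/-- The worst equilibrium welfare `min_{a ∈ NE(G)} W(a)`. -/
noncomputable def worstNash (G : RAGame n) (f w : ℕ → ℝ) : ℝ :=
  sInf { x : ℝ | ∃ a : G.Alloc, G.IsNash f a ∧ x = G.welfare w a }

end RAGame

/-- The price of anarchy `PoA(f,w,n)` over the class `G_{f,w}^n` of games with at
most `n` agents and strictly positive optimal welfare. -/
noncomputable def PoA (f w : ℕ → ℝ) (n : ℕ) : ℝ :=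
  sInf { x : ℝ | ∃ G : RAGame n, 0 < G.optVal w ∧ x = G.worstNash f w / G.optVal w }

/-- `λ* = max_{l ∈ [n]} w(l)/(l·f(1))`. -/
noncomputable def lamStar (w f : ℕ → ℝ) (n : ℕ) (hn : 1 ≤ n) : ℝ :=
  (Finset.Icc 1 n).sup' (Finset.nonempty_Icc.mpr hn) (fun l => w l / ((l : ℝ) * f 1))

/-! ### Counts, utilities and existence of equilibria -/

namespace RAGame

variable {n : ℕ} (G : RAGame n)

instance instFiniteAlloc : Finite G.Alloc :=
  inferInstanceAs (Finite ((i : Fin G.m) → {s : Finset G.R // s ∈ G.A i}))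

instance instNonemptyAlloc : Nonempty G.Alloc :=
  ⟨fun i => ⟨(G.A_ne i).choose, (G.A_ne i).choose_spec⟩⟩

/-- The allocation in which agent `i` deviates from `a` to the choice `s`: the `Function.update` of
the definition of an equilibrium, with `G.Alloc` as its type. -/
def deviate (a : G.Alloc) (i : Fin G.m) (s : {s : Finset G.R // s ∈ G.A i}) : G.Alloc :=
  Function.update (β := fun i => {s : Finset G.R // s ∈ G.A i}) a i s

lemma deviate_self (a : G.Alloc) (i : Fin G.m) (s : {s : Finset G.R // s ∈ G.A i}) :
    G.deviate a i s i = s :=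
  Function.update_self ..

lemma deviate_of_ne (a : G.Alloc) (i : Fin G.m) (s : {s : Finset G.R // s ∈ G.A i})
    (k : Fin G.m) (h : k ≠ i) : G.deviate a i s k = a k :=
  Function.update_of_ne (β := fun i => {s : Finset G.R // s ∈ G.A i}) h s a

lemma deviate_eq_self (a : G.Alloc) (i : Fin G.m) : G.deviate a i (a i) = a :=
  Function.update_eq_self (β := fun i => {s : Finset G.R // s ∈ G.A i}) i a

lemma isNash_iff (f : ℕ → ℝ) (a : G.Alloc) :
    G.IsNash f a ↔ ∀ (i : Fin G.m) (s : {s : Finset G.R // s ∈ G.A i}),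
      G.utility f (G.deviate a i s) i ≤ G.utility f a i :=
  Iff.rfl

/-- The number of agents other than `i` selecting `r`. -/
def others (i : Fin G.m) (a : G.Alloc) (r : G.R) : ℕ :=
  (Finset.univ.filter fun k => k ≠ i ∧ r ∈ (a k).val).card

lemma count_eq_others (i : Fin G.m) (a : G.Alloc) (r : G.R) :
    G.count a r = G.others i a r + if r ∈ (a i).val then 1 else 0 := by
  unfold count others
  split_ifs with h
  · rw [← Finset.card_erase_add_one (a := i) (by simpa using h)]
    congr 2
    ext k
    simp
  · rw [add_zero]
    congr 1
    ext k
    simp only [Finset.mem_filter, Finset.mem_univ, true_and]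
    constructor
    · intro hk
      refine ⟨?_, hk⟩
      rintro rfl
      exact h hk
    · exact fun hk => hk.2

lemma others_update (i : Fin G.m) (a : G.Alloc) (s : {s : Finset G.R // s ∈ G.A i}) (r : G.R) :
    G.others i (G.deviate a i s) r = G.others i a r := by
  unfold others
  congr 1
  ext k
  simp only [Finset.mem_filter, Finset.mem_univ, true_and]
  constructor
  · rintro ⟨h, h2⟩
    rw [G.deviate_of_ne a i s k h] at h2
    exact ⟨h, h2⟩
  · rintro ⟨h, h2⟩
    refine ⟨h, ?_⟩
    rw [G.deviate_of_ne a i s k h]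
    exact h2

lemma utility_eq_others (f : ℕ → ℝ) (a : G.Alloc) (i : Fin G.m) :
    G.utility f a i = ∑ r ∈ (a i).val, G.v r * f (G.others i a r + 1) := by
  unfold utility
  refine Finset.sum_congr rfl fun r hr => ?_
  rw [G.count_eq_others i a r, if_pos hr]

lemma utility_update (f : ℕ → ℝ) (a : G.Alloc) (i : Fin G.m)
    (s : {s : Finset G.R // s ∈ G.A i}) :
    G.utility f (G.deviate a i s) i =
      ∑ r ∈ s.val, G.v r *
        (if r ∈ (a i).val then f (G.count a r) else f (G.count a r + 1)) := by
  rw [utility_eq_others, deviate_self]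
  refine Finset.sum_congr rfl fun r _ => ?_
  rw [others_update, G.count_eq_others i a r]
  split_ifs <;> simp

/-- Rosenthal's potential `Σ_r v_r (f(1) + ⋯ + f(|a|_r))`. -/
def potential (f : ℕ → ℝ) (a : G.Alloc) : ℝ :=
  ∑ r, G.v r * ∑ k ∈ Finset.range (G.count a r), f (k + 1)

/-- The potential splits into agent `i`'s utility and a term that agent `i` does not influence. -/
lemma potential_eq (f : ℕ → ℝ) (a : G.Alloc) (i : Fin G.m) :
    G.potential f a =
      (∑ r, G.v r * ∑ k ∈ Finset.range (G.others i a r), f (k + 1)) + G.utility f a i := by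
  have hU : G.utility f a i =
      ∑ r, if r ∈ (a i).val then G.v r * f (G.others i a r + 1) else 0 := by
    rw [utility_eq_others, ← Finset.sum_filter]
    refine Finset.sum_congr ?_ fun _ _ => rfl
    ext r
    simp
  rw [hU, ← Finset.sum_add_distrib, potential]
  refine Finset.sum_congr rfl fun r _ => ?_
  rw [G.count_eq_others i a r]
  split_ifs
  · rw [Finset.sum_range_succ, mul_add]
  · simp

lemma exists_nash (f : ℕ → ℝ) : ∃ a : G.Alloc, G.IsNash f a := by
  obtain ⟨a, ha⟩ := Finite.exists_max (G.potential f)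
  refine ⟨a, (G.isNash_iff f a).2 fun i s => ?_⟩
  have h := ha (G.deviate a i s)
  rw [G.potential_eq f a i, G.potential_eq f _ i] at h
  simp only [others_update] at h
  linarith

lemma welfare_eq (w : ℕ → ℝ) (hw0 : w 0 = 0) (a : G.Alloc) :
    G.welfare w a = ∑ r, G.v r * w (G.count a r) := by
  unfold welfare
  rw [Finset.sum_filter]
  refine Finset.sum_congr rfl fun r _ => ?_
  split_ifs with h
  · rfl
  · have : G.count a r = 0 := by omega
    rw [this, hw0, mul_zero]

lemma welfare_set_finite (w : ℕ → ℝ) : { x : ℝ | ∃ a : G.Alloc, x = G.welfare w a }.Finite := by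
  refine (Set.finite_range (G.welfare w)).subset ?_
  rintro x ⟨a, rfl⟩
  exact ⟨a, rfl⟩

lemma welfare_le_optVal (w : ℕ → ℝ) (a : G.Alloc) : G.welfare w a ≤ G.optVal w :=
  le_csSup (G.welfare_set_finite w).bddAbove ⟨a, rfl⟩

lemma exists_optVal (w : ℕ → ℝ) : ∃ a : G.Alloc, G.optVal w = G.welfare w a := by
  obtain ⟨a⟩ := (inferInstance : Nonempty G.Alloc)
  refine Set.Nonempty.csSup_mem ?_ (G.welfare_set_finite w)
  exact ⟨_, a, rfl⟩

lemma nash_set_finite (f w : ℕ → ℝ) :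
    { x : ℝ | ∃ a : G.Alloc, G.IsNash f a ∧ x = G.welfare w a }.Finite :=
  (G.welfare_set_finite w).subset fun _ ⟨a, _, h⟩ => ⟨a, h⟩

lemma worstNash_le (f w : ℕ → ℝ) (a : G.Alloc) (ha : G.IsNash f a) :
    G.worstNash f w ≤ G.welfare w a :=
  csInf_le (G.nash_set_finite f w).bddBelow ⟨a, ha, rfl⟩

lemma exists_worstNash (f w : ℕ → ℝ) :
    ∃ a : G.Alloc, G.IsNash f a ∧ G.worstNash f w = G.welfare w a := by
  obtain ⟨a, ha⟩ := G.exists_nash f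
  refine Set.Nonempty.csInf_mem ?_ (G.nash_set_finite f w)
  exact ⟨_, a, ha, rfl⟩

/-! ### The smoothness inequality -/

/-- The number of agents selecting `r` in both `e` and `o`. -/
def both (e o : G.Alloc) (r : G.R) : ℕ :=
  (Finset.univ.filter fun i => r ∈ (o i).val ∧ r ∈ (e i).val).card

/-- The number of agents selecting `r` in `o` but not in `e`. -/
def onlyOpt (e o : G.Alloc) (r : G.R) : ℕ :=
  (Finset.univ.filter fun i => r ∈ (o i).val ∧ r ∉ (e i).val).card

lemma both_add_onlyOpt (e o : G.Alloc) (r : G.R) :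
    G.both e o r + G.onlyOpt e o r = G.count o r := by
  unfold both onlyOpt count
  rw [← Finset.filter_filter, ← Finset.filter_filter, Finset.card_filter_add_card_filter_not]

lemma both_le_count (e o : G.Alloc) (r : G.R) : G.both e o r ≤ G.count e r := by
  unfold both count
  exact Finset.card_le_card fun i => by simp

lemma count_add_onlyOpt_le (e o : G.Alloc) (r : G.R) :
    G.count e r + G.onlyOpt e o r ≤ n := by
  refine le_trans ?_ G.m_le
  unfold count onlyOpt
  rw [← Finset.card_union_of_disjoint]
  · exact (Finset.card_le_univ _).trans (by simp)
  · rw [Finset.disjoint_filter]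
    intro i _ h h2
    exact h2.2 h

lemma sum_utility (f : ℕ → ℝ) (a : G.Alloc) :
    ∑ i, G.utility f a i = ∑ r, G.v r * ((G.count a r : ℝ) * f (G.count a r)) := by
  have h : ∀ i, G.utility f a i =
      ∑ r, if r ∈ (a i).val then G.v r * f (G.count a r) else 0 := by
    intro i
    rw [utility, ← Finset.sum_filter]
    refine Finset.sum_congr ?_ fun _ _ => rfl
    ext r
    simp
  simp only [h]
  rw [Finset.sum_comm]
  refine Finset.sum_congr rfl fun r _ => ?_
  rw [← Finset.sum_filter, Finset.sum_const, nsmul_eq_mul]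
  change (G.count a r : ℝ) * _ = _
  ring

lemma sum_utility_update (f : ℕ → ℝ) (e o : G.Alloc) :
    ∑ i, G.utility f (G.deviate e i (o i)) i =
      ∑ r, G.v r * ((G.both e o r : ℝ) * f (G.count e r) +
        (G.onlyOpt e o r : ℝ) * f (G.count e r + 1)) := by
  have h : ∀ i, G.utility f (G.deviate e i (o i)) i =
      ∑ r, ((if r ∈ (o i).val ∧ r ∈ (e i).val then G.v r * f (G.count e r) else 0) +
        (if r ∈ (o i).val ∧ r ∉ (e i).val then G.v r * f (G.count e r + 1) else 0)) := by
    intro i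
    rw [utility_update, ← Finset.sum_subset (Finset.subset_univ (o i).val)]
    · refine Finset.sum_congr rfl fun r hr => ?_
      by_cases he : r ∈ (e i).val <;> simp [hr, he]
    · intro r _ hr
      simp [hr]
  simp only [h]
  rw [Finset.sum_comm]
  refine Finset.sum_congr rfl fun r _ => ?_
  rw [Finset.sum_add_distrib, ← Finset.sum_filter, ← Finset.sum_filter, Finset.sum_const,
    Finset.sum_const, nsmul_eq_mul, nsmul_eq_mul]
  change (G.both e o r : ℝ) * _ + (G.onlyOpt e o r : ℝ) * _ = _
  ring

/-- Smoothness: a resource-wise inequality with multiplier `lam ≥ 0` bounds the welfare of every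
allocation by `mu` times the welfare of any equilibrium. -/
lemma nash_bound (f w : ℕ → ℝ) (hw0 : w 0 = 0) (lam mu : ℝ) (hlam : 0 ≤ lam)
    (hres : ∀ c b x : ℕ, x ≤ c → c + b ≤ n →
      w (x + b) + lam * (c * f c - (x * f c + b * f (c + 1))) ≤ mu * w c)
    (e o : G.Alloc) (he : G.IsNash f e) : G.welfare w o ≤ mu * G.welfare w e := by
  have h1 : ∑ i, G.utility f (G.deviate e i (o i)) i ≤ ∑ i, G.utility f e i :=
    Finset.sum_le_sum fun i _ => (G.isNash_iff f e).1 he i (o i)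
  rw [sum_utility, sum_utility_update] at h1
  have h2 : ∑ r, G.v r * (w (G.both e o r + G.onlyOpt e o r) +
        lam * (G.count e r * f (G.count e r) - (G.both e o r * f (G.count e r) +
          G.onlyOpt e o r * f (G.count e r + 1)))) ≤
      ∑ r, G.v r * (mu * w (G.count e r)) :=
    Finset.sum_le_sum fun r _ => mul_le_mul_of_nonneg_left
      (hres _ _ _ (G.both_le_count e o r) (G.count_add_onlyOpt_le e o r)) (G.v_nonneg r)
  rw [G.welfare_eq w hw0, G.welfare_eq w hw0, Finset.mul_sum]
  have h3 := mul_nonneg hlam (sub_nonneg.2 h1)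
  rw [← Finset.sum_sub_distrib, Finset.mul_sum] at h3
  refine le_trans ?_ (h2.trans (le_of_eq (Finset.sum_congr rfl fun r _ => by ring)))
  refine le_trans (le_add_of_nonneg_right h3) ?_
  rw [← Finset.sum_add_distrib]
  refine le_of_eq (Finset.sum_congr rfl fun r _ => ?_)
  rw [both_add_onlyOpt]
  ring

end RAGame

/-! ### The cyclic game -/

lemma sum_fin_sub_left {n : ℕ} [NeZero n] (i : Fin n) (g : Fin n → ℝ) :
    ∑ c : Fin n, g (i - c) = ∑ k, g k :=
  (Equiv.subLeft i).sum_comp g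

lemma card_fin_sub_right {n : ℕ} [NeZero n] (c : Fin n) (E : Finset (Fin n)) :
    (Finset.univ.filter fun i : Fin n => i - c ∈ E).card = E.card := by
  refine Finset.card_bij (fun i _ => i - c) (by simp) (by simp) fun k hk => ⟨k + c, ?_⟩
  simpa using hk

/-- The set of resources `(c, t)` used by agent `i`, when resource `(c, t)` is used by the agents
in the translate `c + P t`. -/
def cyc {n : ℕ} [NeZero n] (P : Bool → Finset (Fin n)) (i : Fin n) : Finset (Fin n × Bool) :=
  Finset.univ.filter fun r => i - r.1 ∈ P r.2

/-- The cyclic game: agent `i` chooses between `cyc E i` and `cyc O i`. -/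
abbrev cycGame {n : ℕ} [NeZero n] (E O : Bool → Finset (Fin n)) (v : Bool → ℝ)
    (hv : ∀ t, 0 ≤ v t) : RAGame n where
  R := Fin n × Bool
  v r := v r.2
  v_nonneg r := hv r.2
  m := n
  m_le := le_rfl
  A i := {cyc E i, cyc O i}
  A_ne i := by simp

lemma sum_cycGame {n : ℕ} (g : Fin n × Bool → ℝ) (h : Bool → ℝ) (hg : ∀ r, g r = h r.2) :
    ∑ r, g r = n * (h true + h false) := by
  simp [Fintype.sum_prod_type, hg, mul_add]

section cyclic

variable {n : ℕ} [NeZero n] (E O : Bool → Finset (Fin n)) (v : Bool → ℝ) (hv : ∀ t, 0 ≤ v t)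

/-- The allocation in which every agent chooses `cyc E i`. -/
def cycE : (cycGame E O v hv).Alloc := fun i =>
  ⟨cyc E i, Finset.mem_insert_self (cyc E i) {cyc O i}⟩

/-- The allocation in which every agent chooses `cyc O i`. -/
def cycO : (cycGame E O v hv).Alloc := fun i =>
  ⟨cyc O i, Finset.mem_insert_of_mem (Finset.mem_singleton_self (cyc O i))⟩

lemma count_cycE (r : Fin n × Bool) :
    (cycGame E O v hv).count (cycE E O v hv) r = (E r.2).card := by
  rw [← card_fin_sub_right r.1 (E r.2)]
  unfold RAGame.count
  congr 1
  ext i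
  simp [cycE, cyc]

lemma count_cycO (r : Fin n × Bool) :
    (cycGame E O v hv).count (cycO E O v hv) r = (O r.2).card := by
  rw [← card_fin_sub_right r.1 (O r.2)]
  unfold RAGame.count
  congr 1
  ext i
  simp [cycO, cyc]

lemma welfare_cycE (w : ℕ → ℝ) (hw0 : w 0 = 0) :
    (cycGame E O v hv).welfare w (cycE E O v hv) =
      n * (v true * w (E true).card + v false * w (E false).card) := by
  rw [RAGame.welfare_eq _ _ hw0]
  exact sum_cycGame _ (fun t => v t * w (E t).card) fun r => by rw [count_cycE]

lemma welfare_cycO (w : ℕ → ℝ) (hw0 : w 0 = 0) :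
    (cycGame E O v hv).welfare w (cycO E O v hv) =
      n * (v true * w (O true).card + v false * w (O false).card) := by
  rw [RAGame.welfare_eq _ _ hw0]
  exact sum_cycGame _ (fun t => v t * w (O t).card) fun r => by rw [count_cycO]

lemma sum_cyc (P : Bool → Finset (Fin n)) (i : Fin n) (g : Bool → Fin n → ℝ) :
    ∑ r ∈ cyc P i, g r.2 (i - r.1) = ∑ k ∈ P true, g true k + ∑ k ∈ P false, g false k := by
  unfold cyc
  have h : ∀ t, ∑ k ∈ P t, g t k = ∑ k, if k ∈ P t then g t k else 0 := by
    intro t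
    rw [← Finset.sum_filter]
    simp
  rw [Finset.sum_filter, Fintype.sum_prod_type, h, h]
  simp only [Fintype.sum_bool, Finset.sum_add_distrib]
  rw [sum_fin_sub_left i (fun k => if k ∈ P true then g true k else 0),
    sum_fin_sub_left i (fun k => if k ∈ P false then g false k else 0)]

/-- The allocation `cycE` is an equilibrium as soon as the (agent-independent) utility of
deviating to `cyc O i` is at most the equilibrium utility. -/
lemma cycE_isNash (f : ℕ → ℝ)
    (h : v true * ((O true ∩ E true).card * f (E true).card +
          (O true \ E true).card * f ((E true).card + 1)) +
        v false * ((O false ∩ E false).card * f (E false).card +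
          (O false \ E false).card * f ((E false).card + 1)) ≤
      v true * ((E true).card * f (E true).card) +
        v false * ((E false).card * f (E false).card)) :
    (cycGame E O v hv).IsNash f (cycE E O v hv) := by
  have key : ∀ (P : Bool → Finset (Fin n)) (i : Fin n),
      ∑ r ∈ cyc P i, v r.2 * (if r ∈ cyc E i then f (E r.2).card else f ((E r.2).card + 1)) =
      v true * ((P true ∩ E true).card * f (E true).card +
          (P true \ E true).card * f ((E true).card + 1)) +
        v false * ((P false ∩ E false).card * f (E false).card +
          (P false \ E false).card * f ((E false).card + 1)) := by
    intro P i
    have := sum_cyc P i fun t k => v t *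
      (if k ∈ E t then f (E t).card else f ((E t).card + 1))
    simp only [cyc, Finset.mem_filter, Finset.mem_univ, true_and] at this ⊢
    rw [this]
    congr 1 <;>
    · rw [← Finset.mul_sum, Finset.sum_ite, Finset.sum_const, Finset.sum_const,
        nsmul_eq_mul, nsmul_eq_mul, Finset.filter_mem_eq_inter, Finset.filter_notMem_eq_sdiff]
  rw [RAGame.isNash_iff]
  intro i s
  have hU : (cycGame E O v hv).utility f (cycE E O v hv) i =
      v true * ((E true).card * f (E true).card) +
        v false * ((E false).card * f (E false).card) := by
    have h2 := (cycGame E O v hv).utility_update f (cycE E O v hv) i (cycE E O v hv i)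
    rw [RAGame.deviate_eq_self] at h2
    rw [h2]
    simp only [count_cycE]
    refine (key E i).trans ?_
    simp
  rw [hU, RAGame.utility_update]
  simp only [count_cycE]
  obtain ⟨s, hs⟩ := s
  rcases Finset.mem_insert.1 hs with rfl | hs
  · refine ((key E i).trans ?_).le
    simp
  · rw [Finset.mem_singleton] at hs
    subst hs
    exact (key O i).trans_le h

end cyclic

lemma card_fin_interval {n : ℕ} (a b : ℕ) (hb : b ≤ n) :
    (Finset.univ.filter fun k : Fin n => a ≤ k.val ∧ k.val < b).card = b - a := by
  rw [← Nat.card_Ico a b]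
  refine Finset.card_bij (fun k _ => k.val) ?_ ?_ ?_
  · intro k hk
    simpa using hk
  · intro k _ l _ h
    exact Fin.ext h
  · intro k hk
    rw [Finset.mem_Ico] at hk
    exact ⟨⟨k, by omega⟩, by simpa using hk, rfl⟩

/-- The game witnessing tightness for the resource type `(j, l, x)` and the multiplier
`w b / (b f 1)`. -/
lemma exists_bad_game (n : ℕ) (hn : 1 ≤ n) (f w : ℕ → ℝ) (hw0 : w 0 = 0) (hf1 : 0 < f 1)
    (j l x b : ℕ) (hxj : x ≤ j) (hxl : x ≤ l) (hjl : j + (l - x) ≤ n)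
    (hb : 1 ≤ b) (hbn : b ≤ n)
    (s : ℝ) (hs : s = (j - x : ℝ) * f j - (l - x : ℝ) * f (j + 1)) (hs0 : 0 ≤ s) :
    ∃ (G : RAGame n) (e o : G.Alloc), G.IsNash f e ∧
      G.welfare w e = n * (b * f 1) * w j ∧
      G.welfare w o = n * (b * f 1) * (w l + w b / (b * f 1) * s) := by
  have : NeZero n := ⟨by omega⟩
  have hb0 : (0 : ℝ) < b := by exact_mod_cast hb
  let E : Bool → Finset (Fin n) := fun t =>
    if t then Finset.univ.filter fun k => 0 ≤ k.val ∧ k.val < j else ∅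
  let O : Bool → Finset (Fin n) := fun t =>
    if t then Finset.univ.filter fun k => j - x ≤ k.val ∧ k.val < j + (l - x)
    else Finset.univ.filter fun k => 0 ≤ k.val ∧ k.val < b
  let v : Bool → ℝ := fun t => if t then b * f 1 else s
  have hv : ∀ t, 0 ≤ v t := by
    intro t
    cases t
    · simpa [v] using hs0
    · simp only [v, if_true]; positivity
  have hE1 : (E true).card = j := by
    simpa [E] using card_fin_interval (n := n) 0 j (by omega)
  have hE2 : (E false).card = 0 := by simp [E]
  have hO1 : (O true).card = l := by
    have := card_fin_interval (n := n) (j - x) (j + (l - x)) hjl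
    rw [show j + (l - x) - (j - x) = l by omega] at this
    simpa [O] using this
  have hO2 : (O false).card = b := by
    simpa [O] using card_fin_interval (n := n) 0 b hbn
  have hI : (O true ∩ E true).card = x := by
    have := card_fin_interval (n := n) (j - x) j (by omega)
    rw [show j - (j - x) = x by omega] at this
    rw [← this]
    congr 1
    ext k
    simp only [O, E, if_true, Finset.mem_inter, Finset.mem_filter, Finset.mem_univ, true_and]
    omega
  have hD : (O true \ E true).card = l - x := by
    have := Finset.card_inter_add_card_sdiff (O true) (E true)
    omega
  have hI2 : O false ∩ E false = ∅ := by simp [E]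
  have hD2 : O false \ E false = O false := by simp [E]
  refine ⟨cycGame E O v hv, cycE E O v hv, cycO E O v hv, ?_, ?_, ?_⟩
  · refine cycE_isNash E O v hv f (le_of_eq ?_)
    rw [hI, hD, hI2, hD2, hE1, hE2, hO2, Nat.cast_sub hxl]
    simp only [v, hs, if_true, Finset.card_empty, Nat.cast_zero, zero_add, Bool.false_eq_true,
      if_false]
    ring
  · rw [welfare_cycE _ _ _ _ _ hw0, hE1, hE2, hw0]
    simp only [v, if_true]
    ring
  · rw [welfare_cycO _ _ _ _ _ hw0, hO1, hO2]
    simp only [v, if_true, Bool.false_eq_true, if_false]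
    field_simp

/-! ### The finite maximum -/

/-- The set of numbers of which `W*` is the maximum, with multiplier `lam`. -/
def wSet (n : ℕ) (w f : ℕ → ℝ) (lam : ℝ) : Set ℝ :=
  { x : ℝ |
    (∃ j l : ℕ, j ≤ n ∧ l ≤ n ∧ j ≠ 0 ∧ 1 ≤ j + l ∧ j + l ≤ n ∧
      x = w l / w j + lam * ((j : ℝ) * f j / w j - (l : ℝ) * f (j + 1) / w j)) ∨
    (∃ j l : ℕ, j ≤ n ∧ l ≤ n ∧ n < j + l ∧
      x = w l / w j + lam * (((n : ℝ) - (l : ℝ)) * f j / w j -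
        ((n : ℝ) - (j : ℝ)) * f (j + 1) / w j)) }

lemma wSet_finite (n : ℕ) (w f : ℕ → ℝ) (lam : ℝ) : (wSet n w f lam).Finite := by
  have hfin : (Set.Iic n ×ˢ Set.Iic n : Set (ℕ × ℕ)).Finite :=
    (Set.finite_Iic n).prod (Set.finite_Iic n)
  refine ((hfin.image fun p : ℕ × ℕ => w p.2 / w p.1 +
      lam * ((p.1 : ℝ) * f p.1 / w p.1 - (p.2 : ℝ) * f (p.1 + 1) / w p.1)).union
    (hfin.image fun p : ℕ × ℕ => w p.2 / w p.1 +
      lam * (((n : ℝ) - (p.2 : ℝ)) * f p.1 / w p.1 -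
        ((n : ℝ) - (p.1 : ℝ)) * f (p.1 + 1) / w p.1))).subset ?_
  rintro x (⟨j, l, hj, hl, _, _, _, rfl⟩ | ⟨j, l, hj, hl, _, rfl⟩)
  · exact Or.inl ⟨(j, l), ⟨hj, hl⟩, rfl⟩
  · exact Or.inr ⟨(j, l), ⟨hj, hl⟩, rfl⟩

/-- Every resource type obeys the inequality with `mu = W*`: the overlap `x` enters with a
nonpositive coefficient, so it may be replaced by its smallest feasible value. -/
lemma resource_bound (n : ℕ) (w f : ℕ → ℝ) (lam : ℝ) (hlam : 0 ≤ lam)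
    (hw : ∀ j, 1 ≤ j → j ≤ n → 0 < w j) (hw0 : w 0 = 0)
    (hmono : ∀ j, 1 ≤ j → j ≤ n → f (j + 1) ≤ f j)
    (hlam1 : ∀ l, 1 ≤ l → l ≤ n → w l ≤ lam * (l * f 1))
    (c b x : ℕ) (hxc : x ≤ c) (hcb : c + b ≤ n) :
    w (x + b) + lam * (c * f c - (x * f c + b * f (c + 1))) ≤ sSup (wSet n w f lam) * w c := by
  rcases Nat.eq_zero_or_pos c with rfl | hc
  · obtain rfl : x = 0 := by omega
    rcases Nat.eq_zero_or_pos b with rfl | hb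
    · simp [hw0]
    · have := hlam1 b hb (by omega)
      simp only [hw0, zero_add, Nat.cast_zero, zero_mul, mul_zero]
      linarith
  have hcpos := hw c hc (by omega)
  have hm := hmono c hc (by omega)
  have hbdd := (wSet_finite n w f lam).bddAbove
  rcases le_or_gt (c + (x + b)) n with h | h
  · have hmem := le_csSup hbdd (Or.inl ⟨c, x + b, by omega, by omega, by omega, by omega, h, rfl⟩)
    have hx : (0 : ℝ) ≤ x := Nat.cast_nonneg x
    refine le_trans ?_ (mul_le_mul_of_nonneg_right hmem hcpos.le)
    have e : (w (x + b) / w c + lam * ((c : ℝ) * f c / w c - ((x + b : ℕ) : ℝ) * f (c + 1) / w c))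
        * w c = w (x + b) + lam * (c * f c - (x + b) * f (c + 1)) := by
      push_cast
      field_simp
    rw [e]
    have := mul_nonneg hlam (mul_nonneg hx (sub_nonneg.2 hm))
    linarith
  · have hmem := le_csSup hbdd (Or.inr ⟨c, x + b, by omega, by omega, h, rfl⟩)
    have hx : (0 : ℝ) ≤ n - c - b := by
      have : ((c + b : ℕ) : ℝ) ≤ n := by exact_mod_cast hcb
      push_cast at this
      linarith
    refine le_trans ?_ (mul_le_mul_of_nonneg_right hmem hcpos.le)
    have e : (w (x + b) / w c + lam * (((n : ℝ) - ((x + b : ℕ) : ℝ)) * f c / w c -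
        ((n : ℝ) - c) * f (c + 1) / w c)) * w c =
        w (x + b) + lam * ((n - (x + b)) * f c - (n - c) * f (c + 1)) := by
      push_cast
      field_simp
    rw [e]
    have := mul_nonneg hlam (mul_nonneg hx (sub_nonneg.2 hm))
    linarith

/-- `W*` is attained, up to `≤`, by a resource type `(j, l, x)` whose slope is nonnegative. -/
lemma exists_tight (n : ℕ) (hn : 1 ≤ n) (w f : ℕ → ℝ) (lam : ℝ) (hlam : 0 ≤ lam)
    (hw : ∀ j, 1 ≤ j → j ≤ n → 0 < w j) (hw0 : w 0 = 0)
    (hfpos : ∀ j, 1 ≤ j → j ≤ n → 0 ≤ f j)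
    (hmono : ∀ j, 1 ≤ j → j ≤ n → f (j + 1) ≤ f j)
    (hlam2 : ∀ l, 1 ≤ l → l ≤ n → w l ≤ lam * (l * f l)) :
    ∃ j l x : ℕ, 1 ≤ j ∧ x ≤ j ∧ x ≤ l ∧ j + (l - x) ≤ n ∧
      0 ≤ (j - x : ℝ) * f j - (l - x : ℝ) * f (j + 1) ∧
      sSup (wSet n w f lam) * w j ≤
        w l + lam * ((j - x : ℝ) * f j - (l - x : ℝ) * f (j + 1)) := by
  have hanti : ∀ a b, 1 ≤ a → a ≤ b → b ≤ n → f b ≤ f a := by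
    intro a b ha hab
    induction b, hab using Nat.le_induction with
    | base => intro _; exact le_rfl
    | succ k hk ih => intro hkn; exact (hmono k (by omega) (by omega)).trans (ih (by omega))
  have hmem : sSup (wSet n w f lam) ∈ wSet n w f lam :=
    Set.Nonempty.csSup_mem ⟨_, Or.inl ⟨1, 0, hn, by omega, by omega, by omega, hn, rfl⟩⟩
      (wSet_finite n w f lam)
  rcases hmem with ⟨j, l, hj, hl, hj0, _, hjl, he⟩ | ⟨j, l, hj, hl, hjl, he⟩
  · have hjp : 1 ≤ j := by omega
    have hwj := hw j hjp hj
    have e : sSup (wSet n w f lam) * w j = w l + lam * (j * f j - l * f (j + 1)) := by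
      rw [he]
      field_simp
    rcases le_or_gt l j with h | h
    · refine ⟨j, l, 0, hjp, by omega, by omega, by omega, ?_, ?_⟩
      · have h1 : (l : ℝ) ≤ j := by exact_mod_cast h
        have h2 := mul_le_mul_of_nonneg_right h1 (hfpos j hjp hj)
        have h3 := mul_le_mul_of_nonneg_left (hmono j hjp hj) (Nat.cast_nonneg (α := ℝ) l)
        push_cast
        linarith
      · rw [e]
        simp
    -- For `l > j`, `w l ≤ λ l f(l) ≤ λ l f(j + 1)`, so `(j, 0, 0)` does at least as well.
    · refine ⟨j, 0, 0, hjp, by omega, by omega, by omega, ?_, ?_⟩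
      · have := mul_nonneg (Nat.cast_nonneg (α := ℝ) j) (hfpos j hjp hj)
        simpa using this
      · rw [e, hw0]
        have h1 := hlam2 l (by omega) hl
        have h2 := mul_le_mul_of_nonneg_left (mul_le_mul_of_nonneg_left
          (hanti (j + 1) l (by omega) h hl) (Nat.cast_nonneg (α := ℝ) l)) hlam
        push_cast
        linarith
  · have hjp : 1 ≤ j := by omega
    have hwj := hw j hjp hj
    have e : sSup (wSet n w f lam) * w j =
        w l + lam * ((n - l) * f j - (n - j) * f (j + 1)) := by
      rw [he]
      field_simp
    have hjn : (0 : ℝ) ≤ n - j := sub_nonneg.2 (by exact_mod_cast hj)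
    have hln : (0 : ℝ) ≤ n - l := sub_nonneg.2 (by exact_mod_cast hl)
    rcases le_or_gt l j with h | h
    · have hx : ((j + l - n : ℕ) : ℝ) = j + l - n := by
        rw [Nat.cast_sub hjl.le]
        push_cast
        ring
      refine ⟨j, l, j + l - n, hjp, by omega, by omega, by omega, ?_, ?_⟩
      · have h1 : (n - j : ℝ) ≤ n - l := sub_le_sub_left (by exact_mod_cast h) _
        have h2 := mul_le_mul_of_nonneg_right h1 (hfpos j hjp hj)
        have h3 := mul_le_mul_of_nonneg_left (hmono j hjp hj) hjn
        rw [hx]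
        linarith
      · rw [e, hx]
        refine le_of_eq ?_
        ring
    · refine ⟨j, 0, 0, hjp, by omega, by omega, by omega, ?_, ?_⟩
      · have := mul_nonneg (Nat.cast_nonneg (α := ℝ) j) (hfpos j hjp hj)
        simpa using this
      -- `l f(l) ≤ l f(j + 1)`, and the remaining coefficient `j + l - n` of `f(j + 1)` is
      -- nonnegative, so that `f(j + 1)` can be replaced by `f j`.
      · rw [e, hw0]
        have h1 := hlam2 l (by omega) hl
        have h2 := mul_le_mul_of_nonneg_left (mul_le_mul_of_nonneg_left
          (hanti (j + 1) l (by omega) h hl) (Nat.cast_nonneg (α := ℝ) l)) hlam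
        have h4 : (0 : ℝ) ≤ j + l - n := by
          have : (n : ℝ) ≤ ((j + l : ℕ) : ℝ) := by exact_mod_cast hjl.le
          push_cast at this
          linarith
        have h3 := mul_le_mul_of_nonneg_left (mul_le_mul_of_nonneg_left
          (hmono j hjp hj) h4) hlam
        push_cast
        linarith

/-- Remark 1 / equation (14): under the assumptions of Corollary 1, the price of
anarchy is computed explicitly as `1/W*`, where `W*` is the maximum of finitely
many numbers depending on the entries of `f` and `w`. -/
theorem poa_explicit_formula (n : ℕ) (w f : ℕ → ℝ) (hn : 1 ≤ n)
    (hw : ∀ j, 1 ≤ j → j ≤ n → 0 < w j)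
    (hw0 : w 0 = 0) (hwn1 : w (n + 1) = 0)
    (hf0 : f 0 = 0) (hfn1 : f (n + 1) = 0)
    (hf1 : 0 < f 1)
    (hmono : ∀ j, 1 ≤ j → j + 1 ≤ n → f (j + 1) ≤ f j)
    (hfmin : ∀ j, 1 ≤ j → j ≤ n →
      (w j / (j : ℝ)) *
        ((Finset.Icc 1 n).inf' (Finset.nonempty_Icc.mpr hn)
          (fun l => (l : ℝ) * f 1 / w l)) ≤ f j) :
    PoA f w n =
      1 / sSup { x : ℝ |
        (∃ j l : ℕ, j ≤ n ∧ l ≤ n ∧ j ≠ 0 ∧ 1 ≤ j + l ∧ j + l ≤ n ∧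
          x = w l / w j + lamStar w f n hn *
                ((j : ℝ) * f j / w j - (l : ℝ) * f (j + 1) / w j)) ∨
        (∃ j l : ℕ, j ≤ n ∧ l ≤ n ∧ n < j + l ∧
          x = w l / w j + lamStar w f n hn *
                (((n : ℝ) - (l : ℝ)) * f j / w j -
                  ((n : ℝ) - (j : ℝ)) * f (j + 1) / w j)) } := by
  have hlamge : ∀ l, 1 ≤ l → l ≤ n → w l / ((l : ℝ) * f 1) ≤ lamStar w f n hn := fun l h1 h2 =>
    Finset.le_sup' (fun l : ℕ => w l / ((l : ℝ) * f 1)) (Finset.mem_Icc.2 ⟨h1, h2⟩)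
  obtain ⟨b, hbmem, hb⟩ := Finset.exists_mem_eq_sup' (Finset.nonempty_Icc.mpr hn)
    (fun l : ℕ => w l / ((l : ℝ) * f 1))
  change lamStar w f n hn = _ at hb
  rw [Finset.mem_Icc] at hbmem
  have hb0 : (0 : ℝ) < b := by exact_mod_cast hbmem.1
  have hwb := hw b hbmem.1 hbmem.2
  change PoA f w n = 1 / sSup (wSet n w f (lamStar w f n hn))
  generalize lamStar w f n hn = lam at hlamge hb ⊢
  have hlam : 0 < lam := by rw [hb]; positivity
  have hlam1 : ∀ l, 1 ≤ l → l ≤ n → w l ≤ lam * (l * f 1) := by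
    intro l h1 h2
    have hl : (0 : ℝ) < l := by exact_mod_cast h1
    exact (div_le_iff₀ (by positivity)).1 (hlamge l h1 h2)
  -- The minimum in the hypothesis on `f` equals `1 / lam`; only `1 / lam ≤ min` is needed.
  have hlam2 : ∀ l, 1 ≤ l → l ≤ n → w l ≤ lam * (l * f l) := by
    intro l h1 h2
    have hl : (0 : ℝ) < l := by exact_mod_cast h1
    have hmin : 1 / lam ≤ (Finset.Icc 1 n).inf' (Finset.nonempty_Icc.mpr hn)
        (fun l => (l : ℝ) * f 1 / w l) := by
      refine Finset.le_inf' _ _ fun k hk => ?_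
      rw [Finset.mem_Icc] at hk
      rw [div_le_div_iff₀ hlam (hw k hk.1 hk.2)]
      linarith [hlam1 k hk.1 hk.2]
    have h3 := (mul_le_mul_of_nonneg_left hmin
      (div_nonneg (hw l h1 h2).le hl.le)).trans (hfmin l h1 h2)
    rw [div_mul_div_comm, mul_one, div_le_iff₀ (by positivity)] at h3
    linarith
  have hfpos : ∀ j, 1 ≤ j → j ≤ n → 0 ≤ f j := by
    intro j h1 h2
    have hj : (0 : ℝ) < j := by exact_mod_cast h1
    have h3 := (hw j h1 h2).trans_le (hlam2 j h1 h2)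
    exact (pos_of_mul_pos_right (pos_of_mul_pos_right h3 hlam.le) hj.le).le
  have hmono' : ∀ j, 1 ≤ j → j ≤ n → f (j + 1) ≤ f j := by
    intro j h1 h2
    rcases Nat.lt_or_ge j n with h | h
    · exact hmono j h1 h
    · obtain rfl : j = n := by omega
      rw [hfn1]
      exact hfpos j h1 h2
  have hres := resource_bound n w f lam hlam.le hw hw0 hmono' hlam1
  obtain ⟨j, l, x, hj, hxj, hxl, hjl, hs, htight⟩ :=
    exists_tight n hn w f lam hlam.le hw hw0 hfpos hmono' hlam2
  have hmu : 0 < sSup (wSet n w f lam) := by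
    -- The resource type `c = 1`, `b = 0`, `x = 1` gives `w 1 ≤ W* w 1`.
    have h1 := hres 1 0 1 le_rfl (by omega)
    have hw1 := hw 1 le_rfl hn
    simp only [add_zero, Nat.cast_one, one_mul, Nat.cast_zero, zero_mul, sub_self,
      mul_zero] at h1
    exact pos_of_mul_pos_left (hw1.trans_le h1) hw1.le
  have hlower : ∀ y ∈ { x : ℝ | ∃ G : RAGame n, 0 < G.optVal w ∧
      x = G.worstNash f w / G.optVal w }, 1 / sSup (wSet n w f lam) ≤ y := by
    rintro y ⟨G, hG, rfl⟩
    obtain ⟨e, he, he2⟩ := G.exists_worstNash f w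
    obtain ⟨o, ho⟩ := G.exists_optVal w
    rw [div_le_div_iff₀ hmu hG, he2, ho]
    linarith [G.nash_bound f w hw0 lam _ hlam.le hres e o he]
  obtain ⟨G, e, o, he, hWe, hWo⟩ := exists_bad_game n hn f w hw0 hf1 j l x b hxj hxl hjl
    hbmem.1 hbmem.2 _ rfl hs
  rw [← hb] at hWo
  have hK : (0 : ℝ) < n * (b * f 1) := by
    have : (0 : ℝ) < n := by exact_mod_cast hn
    positivity
  have hwj := hw j hj (by omega)
  have hWo' : sSup (wSet n w f lam) * G.welfare w e ≤ G.welfare w o := by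
    rw [hWe, hWo]
    have := mul_le_mul_of_nonneg_left htight hK.le
    linarith
  have hepos : 0 < G.welfare w e := by rw [hWe]; positivity
  have hopt := G.welfare_le_optVal w o
  have hoptpos : 0 < G.optVal w := (mul_pos hmu hepos).trans_le (hWo'.trans hopt)
  refine le_antisymm ?_ (le_csInf ⟨_, G, hoptpos, rfl⟩ hlower)
  refine (csInf_le ⟨_, hlower⟩ ⟨G, hoptpos, rfl⟩).trans ?_
  rw [div_le_div_iff₀ hoptpos hmu]
  have := mul_le_mul_of_nonneg_right (G.worstNash_le f w e he) hmu.le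
  linarith
end

section
/- Let w : {1,…,n} → ℝ with w(j) > 0 for all j be a welfare basis function and f : {1,…,n} → ℝ with f(1) > 0. Then for every game G ∈ G_{f,w}^n (in particular, a game satisfying max_{a∈A} W(a) > 0) and every pure Nash equilibrium a^e of G, the equilibrium welfare is strictly positive: W(a^e) > 0. -/
namespace RAGame

variable {n : ℕ}

lemma count_le (G : RAGame n) (a : G.Alloc) (r : G.R) : G.count a r ≤ n :=
  ((Finset.card_filter_le _ _).trans (by simp)).trans G.m_le

lemma count_pos_iff (G : RAGame n) (a : G.Alloc) (r : G.R) :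
    0 < G.count a r ↔ ∃ i, r ∈ (a i).val := by
  simp [count, Finset.card_pos, Finset.filter_nonempty_iff]

/-- A resource uncovered in `a` is used by exactly one agent once `i` switches to a choice
containing it. -/
lemma count_update_eq_one (G : RAGame n) (a : G.Alloc) (r : G.R) (i : Fin G.m)
    (s : {s : Finset G.R // s ∈ G.A i}) (hr : r ∈ s.val) (h0 : ¬ 0 < G.count a r) :
    G.count (Function.update a i s) r = 1 := by
  rw [count_pos_iff, not_exists] at h0
  unfold count
  rw [Finset.card_eq_one]
  refine ⟨i, ?_⟩
  ext j
  simp only [Finset.mem_filter, Finset.mem_univ, true_and, Finset.mem_singleton]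
  by_cases hj : j = i
  · subst hj
    -- `Alloc` is not a reducible function type, so the family `β` is given explicitly.
    have h : Function.update a j s j = s := Function.update_self (β := fun i => G.A i) j s a
    exact iff_of_true (h.symm ▸ hr) rfl
  · have h : Function.update a i s j = a j :=
      Function.update_of_ne (β := fun i => G.A i) hj s a
    exact iff_of_false (h.symm ▸ h0 j) hj

/-- Welfare is positive exactly when a resource of positive value is covered. -/
lemma welfare_pos_iff (G : RAGame n) (w : ℕ → ℝ) (hw : ∀ j, 1 ≤ j → j ≤ n → 0 < w j)
    (a : G.Alloc) : 0 < G.welfare w a ↔ ∃ r, 0 < G.count a r ∧ 0 < G.v r := by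
  have hpos : ∀ r, 0 < G.count a r → 0 < w (G.count a r) := fun r hr =>
    hw _ hr (G.count_le a r)
  unfold welfare
  rw [Finset.sum_pos_iff_of_nonneg]
  · refine exists_congr fun r => ?_
    simp only [Finset.mem_filter, Finset.mem_univ, true_and]
    exact and_congr_right fun hr => mul_pos_iff_of_pos_right (hpos r hr)
  · intro r hr
    exact mul_nonneg (G.v_nonneg r) (hpos r (Finset.mem_filter.mp hr).2).le

end RAGame

/-- Lemma 2: if `f(1) > 0`, then in every game of the class `G_{f,w}^n` (i.e. with
strictly positive optimal welfare) every pure Nash equilibrium has strictly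
positive welfare. -/
theorem nash_welfare_pos (n : ℕ) (w f : ℕ → ℝ)
    (hw : ∀ j, 1 ≤ j → j ≤ n → 0 < w j)
    (hf1 : 0 < f 1)
    (G : RAGame n) (hG : 0 < G.optVal w)
    (ae : G.Alloc) (hae : G.IsNash f ae) :
    0 < G.welfare w ae := by
  rw [G.welfare_pos_iff w hw]
  by_contra hne
  have hzero : ∀ r, 0 < G.count ae r → G.v r = 0 := fun r hr =>
    le_antisymm (not_lt.mp fun h => hne ⟨r, hr, h⟩) (G.v_nonneg r)
  -- A supremum of nonpositive reals is nonpositive, so some allocation has positive welfare.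
  obtain ⟨a, ha⟩ : ∃ a : G.Alloc, 0 < G.welfare w a := by
    by_contra! h
    refine hG.not_ge (Real.sSup_nonpos ?_)
    rintro x ⟨a, rfl⟩
    exact h a
  obtain ⟨r, hr, hv⟩ := (G.welfare_pos_iff w hw a).mp ha
  obtain ⟨i, hi⟩ := (G.count_pos_iff a r).mp hr
  have hU : G.utility f ae i = 0 := Finset.sum_eq_zero fun q hq => by
    rw [hzero q ((G.count_pos_iff ae q).mpr ⟨i, hq⟩), zero_mul]
  have hterm : ∀ q ∈ (a i).val,
      G.v q * f (G.count (Function.update ae i (a i)) q) = G.v q * f 1 := by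
    intro q hq
    by_cases hc : 0 < G.count ae q
    · simp [hzero q hc]
    · rw [G.count_update_eq_one ae q i (a i) hq hc]
  have hdev : 0 < G.utility f (Function.update ae i (a i)) i := by
    have h : Function.update ae i (a i) i = a i :=
      Function.update_self (β := fun i => G.A i) i (a i) ae
    unfold RAGame.utility
    rw [h, Finset.sum_congr rfl hterm]
    exact Finset.sum_pos' (fun q _ => mul_nonneg (G.v_nonneg q) hf1.le) ⟨r, hi, mul_pos hv hf1⟩
  exact (hae i (a i)).not_gt (hU ▸ hdev)
end
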